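/- Fix K > 0, x ∈ ℝ, and an irrational w ∈ ℝ. For each N let λ_i^N be reals and ω_i^N = λ_i^N − λ_{i−1}^N, and assume: (i) limsup_{ε→0} limsup_{N→∞} max_{i : |i−Nx|<Nε} N·|ω_{i+1}^N − ω_i^N| < ∞; (ii) max_{i : |i−Nx|<Nε} |ω_i^N − w| → 0 as N→∞ and then ε→0. Then there exist constants C_{N,ε} with C_{N,ε} → 0 as N→∞ and then ε→0 such that for all n ∈ ℤ, |(1/(2Nε)) ∑_{i : |i−Nx|<Nε} μ_K[w, λ_i^N](n) − ∫_0^1 μ_K[w, λ](n) dλ| ≤ C_{N,ε} · exp(−K n²/3). -/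

import Mathlib

/-!
The double limit `N → ∞`, then `ε → 0` is convergence along the iterated filter
`(𝓝[>] 0).curry atTop`, called `dlim` below (`DTendsto` is equivalent to it by
`dTendsto_of_tendsto` and `tendsto_of_dTendsto`).

*Equidistribution.* Let `e_k` be the `k`-th character of `ℝ / ℤ`, `k ≠ 0`. Since
`e_k(λ_i) = e_k(ω_i) e_k(λ_{i-1})` and `ω_i` is uniformly close to `w` on the window,
`(1 - e_k(w)) ∑ e_k(λ_i)` differs from `-e_k(w)` times the telescoping sum
`∑ (e_k(λ_i) - e_k(λ_{i-1}))`, bounded by `2`, by a small multiple of the number of sites.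
As `w` is irrational, `e_k(w) ≠ 1`, so the window averages of `e_k(λ_i)` tend to `0`
(`tendsto_cAvg_fourier`). Density of trigonometric polynomials in `C(ℝ / ℤ)` then gives
convergence of the averages of every continuous function to its integral (`tendsto_cAvg`).

*Uniformity in `n`.* Completing the square,
`μ_K[w,λ](n) = exp(-K(n-w)²/2) Z_{2K}(λ-(n+w)/2) / (Z_K(λ-w) Z_K(λ))` (`muK_eq`). As `Z` is
continuous, positive and `1`-periodic, `λ ↦ μ_K[w,λ](n)` is continuous and `1`-periodic, and it
is at most `B exp(-5Kn²/12)` (`muK_le`). Hence the deviation of the average, multiplied by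
`exp(Kn²/3)`, is `O(exp(-Kn²/12))` uniformly, so only finitely many `n` matter, and each of them
is covered by equidistribution. The constant `C_{N,ε}` is the supremum of these weighted
deviations over `n`.
-/

open Filter
open scoped Classical

/-- The window of lattice sites around `x` at scale `(N, ε)`:
integers `i` with `|i - N·x| < N·ε`. -/
noncomputable def window (N : ℕ) (x ε : ℝ) : Finset ℤ :=
  (Finset.Icc (Int.ceil ((N : ℝ) * x - (N : ℝ) * ε))
      (Int.floor ((N : ℝ) * x + (N : ℝ) * ε))).filter
    (fun i => |(i : ℝ) - (N : ℝ) * x| < (N : ℝ) * ε)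

/-- Window average `(1/(2Nε)) ∑_{i : |i−Nx|<Nε} a i`. -/
noncomputable def winAvg (N : ℕ) (x ε : ℝ) (a : ℤ → ℝ) : ℝ :=
  (1 / (2 * (N : ℝ) * ε)) * ∑ i ∈ window N x ε, a i

/-- Maximum of a (nonnegative) function over a finite set of integers
(0 if the set is empty). -/
noncomputable def fmax (s : Finset ℤ) (f : ℤ → ℝ) : ℝ :=
  ((s.sup fun i => Real.toNNReal (f i) : NNReal) : ℝ)

/-- limsup over `N → ∞`, valued in `EReal` to avoid junk values. -/
noncomputable def elimsup (f : ℕ → ℝ) : EReal :=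
  Filter.limsup (fun N => ((f N : ℝ) : EReal)) Filter.atTop

/-- `Q(N,ε) → L` as `N → ∞` and then `ε → 0`. -/
def DTendsto (Q : ℕ → ℝ → ℝ) (L : ℝ) : Prop :=
  ∀ δ : ℝ, 0 < δ → ∃ ε₀ : ℝ, 0 < ε₀ ∧ ∀ ε : ℝ, 0 < ε → ε < ε₀ →
    elimsup (fun N => |Q N ε - L|) ≤ (δ : EReal)

/-- `limsup_{ε→0} limsup_{N→∞} Q(N,ε) < ∞`. -/
def DBddLimsup (Q : ℕ → ℝ → ℝ) : Prop :=
  ∃ ε₀ : ℝ, 0 < ε₀ ∧ ∃ C : ℝ, ∀ ε : ℝ, 0 < ε → ε < ε₀ →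
    elimsup (fun N => Q N ε) ≤ (C : EReal)

/-- Normalization constant `Z_K(λ) = ∑_{m∈ℤ} exp(−K(m−λ)²)`. -/
noncomputable def Zfun (K lam : ℝ) : ℝ :=
  ∑' m : ℤ, Real.exp (-K * ((m : ℝ) - lam) ^ 2)

/-- Discrete Gaussian pmf `ρ_K[λ](n) = exp(−K(n−λ)²)/Z_K(λ)`. -/
noncomputable def rho (K lam : ℝ) (n : ℤ) : ℝ :=
  Real.exp (-K * ((n : ℝ) - lam) ^ 2) / Zfun K lam

/-- `μ_K[ω,λ](n) = ∑_{m∈ℤ} ρ_K[λ−ω](m) ρ_K[λ](m+n)`. -/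
noncomputable def muK (K ω lam : ℝ) (n : ℤ) : ℝ :=
  ∑' m : ℤ, rho K (lam - ω) m * rho K lam (m + n)

open Topology MeasureTheory

/-! ### The double limit as a filter -/

/-- The filter of pairs `(ε, N)` describing `N → ∞` and then `ε → 0⁺`. -/
noncomputable def dlim : Filter (ℝ × ℕ) := (𝓝[>] (0 : ℝ)).curry atTop

lemma eventually_dlim {P : ℝ × ℕ → Prop} :
    (∀ᶠ p in dlim, P p) ↔ ∀ᶠ ε in 𝓝[>] (0 : ℝ), ∀ᶠ N : ℕ in atTop, P (ε, N) :=
  eventually_curry_iff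

lemma tendsto_of_dTendsto {Q : ℕ → ℝ → ℝ} {L : ℝ} (h : DTendsto Q L) :
    Tendsto (fun p : ℝ × ℕ => Q p.2 p.1) dlim (𝓝 L) := by
  rw [Metric.tendsto_nhds]
  intro δ hδ
  rw [eventually_dlim]
  obtain ⟨ε₀, h0, h1⟩ := h (δ / 2) (by positivity)
  filter_upwards [Ioo_mem_nhdsGT h0] with ε hε
  have h2 : elimsup (fun N => |Q N ε - L|) < (δ : EReal) :=
    (h1 ε hε.1 hε.2).trans_lt (by exact_mod_cast half_lt_self hδ)
  filter_upwards [eventually_lt_of_limsup_lt h2] with N hN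
  rw [Real.dist_eq]
  exact_mod_cast hN

lemma dTendsto_of_tendsto {Q : ℕ → ℝ → ℝ} {L : ℝ}
    (h : Tendsto (fun p : ℝ × ℕ => Q p.2 p.1) dlim (𝓝 L)) : DTendsto Q L := by
  intro δ hδ
  have h1 := (Metric.tendsto_nhds.1 h) δ hδ
  rw [eventually_dlim] at h1
  obtain ⟨ε₀, h0, h2⟩ := mem_nhdsGT_iff_exists_Ioo_subset.1 h1
  refine ⟨ε₀, h0, fun ε he he' => ?_⟩
  have h3 : ∀ᶠ N : ℕ in atTop, dist (Q N ε) L < δ := h2 ⟨he, he'⟩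
  refine limsup_le_of_le (by isBoundedDefault) ?_
  filter_upwards [h3] with N hN
  rw [Real.dist_eq] at hN
  exact_mod_cast hN.le

lemma eventually_dlim_pos : ∀ᶠ p in dlim, 0 < p.1 ∧ 0 < p.2 := by
  rw [eventually_dlim]
  filter_upwards [self_mem_nhdsWithin] with ε hε
  filter_upwards [eventually_gt_atTop 0] with N hN
  exact ⟨hε, hN⟩

lemma tendsto_inv_size :
    Tendsto (fun p : ℝ × ℕ => 1 / (2 * (p.2 : ℝ) * p.1)) dlim (𝓝 0) := by
  rw [Metric.tendsto_nhds]
  intro δ hδ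
  rw [eventually_dlim]
  filter_upwards [self_mem_nhdsWithin] with ε hε
  have hε : 0 < ε := hε
  have h1 : Tendsto (fun N : ℕ => 2 * (N : ℝ) * ε) atTop atTop :=
    (tendsto_natCast_atTop_atTop.const_mul_atTop two_pos).atTop_mul_const hε
  have h2 : Tendsto (fun N : ℕ => 1 / (2 * (N : ℝ) * ε)) atTop (𝓝 0) := by
    simpa only [one_div] using! h1.inv_tendsto_atTop
  exact Metric.tendsto_nhds.1 h2 δ hδ

/-! ### The window -/

lemma mem_window {N : ℕ} {x ε : ℝ} {i : ℤ} :
    i ∈ window N x ε ↔ |(i : ℝ) - (N : ℝ) * x| < (N : ℝ) * ε := by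
  simp only [window, Finset.mem_filter, Finset.mem_Icc, and_iff_right_iff_imp, abs_lt]
  rintro ⟨h1, h2⟩
  exact ⟨Int.ceil_le.2 (by linarith), Int.le_floor.2 (by linarith)⟩

lemma window_eq_Ico (N : ℕ) (x ε : ℝ) :
    window N x ε = Finset.Ico (⌊(N : ℝ) * x - N * ε⌋ + 1) ⌈(N : ℝ) * x + N * ε⌉ := by
  ext i
  rw [mem_window, Finset.mem_Ico, Int.add_one_le_iff, Int.floor_lt, Int.lt_ceil, abs_lt]
  constructor <;> rintro ⟨h1, h2⟩ <;> constructor <;> linarith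

lemma abs_card_window_sub_le {N : ℕ} {x ε : ℝ} (hN : 0 < (N : ℝ) * ε) :
    |((window N x ε).card : ℝ) - 2 * N * ε| ≤ 1 := by
  rw [window_eq_Ico, Int.card_Ico]
  have f1 := Int.floor_le ((N : ℝ) * x - N * ε)
  have f2 := Int.lt_floor_add_one ((N : ℝ) * x - N * ε)
  have c1 := Int.le_ceil ((N : ℝ) * x + N * ε)
  have c2 := Int.ceil_lt_add_one ((N : ℝ) * x + N * ε)
  -- The difference of the endpoints exceeds `-1` and is an integer, so `toNat` does not truncate.
  have h0 : 0 ≤ ⌈(N : ℝ) * x + N * ε⌉ - (⌊(N : ℝ) * x - N * ε⌋ + 1) := by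
    have : (-1 : ℝ) < ((⌈(N : ℝ) * x + N * ε⌉ - (⌊(N : ℝ) * x - N * ε⌋ + 1) : ℤ) : ℝ) := by
      push_cast; linarith
    have : (-1 : ℤ) < ⌈(N : ℝ) * x + N * ε⌉ - (⌊(N : ℝ) * x - N * ε⌋ + 1) := by
      exact_mod_cast this
    omega
  have h1 : (((⌈(N : ℝ) * x + N * ε⌉ - (⌊(N : ℝ) * x - N * ε⌋ + 1)).toNat : ℕ) : ℝ)
      = ((⌈(N : ℝ) * x + N * ε⌉ - (⌊(N : ℝ) * x - N * ε⌋ + 1) : ℤ) : ℝ) := by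
    exact_mod_cast Int.toNat_of_nonneg h0
  rw [h1, abs_le]
  push_cast
  constructor <;> linarith

lemma tendsto_card_window (x : ℝ) :
    Tendsto (fun p : ℝ × ℕ => 1 / (2 * (p.2 : ℝ) * p.1) * ((window p.2 x p.1).card : ℝ))
      dlim (𝓝 1) := by
  rw [tendsto_iff_dist_tendsto_zero]
  refine squeeze_zero' (Eventually.of_forall fun _ => dist_nonneg) ?_ tendsto_inv_size
  filter_upwards [eventually_dlim_pos] with p hp
  obtain ⟨h1, h2⟩ := hp
  have h2' : (0 : ℝ) < p.2 := by exact_mod_cast h2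
  have h3 : 0 < 2 * (p.2 : ℝ) * p.1 := by positivity
  have h4 := abs_card_window_sub_le (N := p.2) (x := x) (by positivity : 0 < (p.2 : ℝ) * p.1)
  have h5 : 1 / (2 * (p.2 : ℝ) * p.1) * ((window p.2 x p.1).card : ℝ) - 1
      = 1 / (2 * (p.2 : ℝ) * p.1) * (((window p.2 x p.1).card : ℝ) - 2 * p.2 * p.1) := by
    rw [mul_sub, one_div_mul_cancel h3.ne']
  rw [Real.dist_eq, h5, abs_mul, abs_of_pos (one_div_pos.2 h3)]
  exact mul_le_of_le_one_right (one_div_pos.2 h3).le h4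

lemma eventually_card_window_le (x : ℝ) :
    ∀ᶠ p in dlim, 1 / (2 * (p.2 : ℝ) * p.1) * ((window p.2 x p.1).card : ℝ) ≤ 2 :=
  (tendsto_card_window x).eventually_le_const one_lt_two

lemma le_fmax {s : Finset ℤ} {f : ℤ → ℝ} {i : ℤ} (hi : i ∈ s) : f i ≤ fmax s f := by
  have h : Real.toNNReal (f i) ≤ s.sup fun i => Real.toNNReal (f i) :=
    Finset.le_sup (f := fun i => Real.toNNReal (f i)) hi
  exact (Real.le_coe_toNNReal _).trans (NNReal.coe_le_coe.2 h)

lemma sum_Ico_int_sub_pred {E : Type*} [AddCommGroup E] (f : ℤ → E) {a b : ℤ} (h : a ≤ b) :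
    ∑ i ∈ Finset.Ico a b, (f i - f (i - 1)) = f (b - 1) - f (a - 1) := by
  induction b, h using Int.leInduction with
  | base => simp
  | succ b hb ih =>
    have : Finset.Ico a (b + 1) = insert b (Finset.Ico a b) := by
      ext i; simp only [Finset.mem_Ico, Finset.mem_insert]; omega
    rw [this, Finset.sum_insert (by simp), ih]
    simp

lemma norm_sum_window_sub_pred_le {f : ℤ → ℂ} (hf : ∀ i, ‖f i‖ ≤ 1) (N : ℕ) (x ε : ℝ) :
    ‖∑ i ∈ window N x ε, (f i - f (i - 1))‖ ≤ 2 := by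
  rw [window_eq_Ico]
  rcases le_total (⌊(N : ℝ) * x - N * ε⌋ + 1) ⌈(N : ℝ) * x + N * ε⌉ with h | h
  · rw [sum_Ico_int_sub_pred f h]
    refine (norm_sub_le _ _).trans ((add_le_add (hf _) (hf _)).trans ?_)
    norm_num
  · rw [Finset.Ico_eq_empty (not_lt.2 h)]; simp

/-! ### Equidistribution -/

/-- Complex-valued version of `winAvg`. -/
noncomputable def cAvg (N : ℕ) (x ε : ℝ) (a : ℤ → ℂ) : ℂ :=
  ((1 / (2 * (N : ℝ) * ε) : ℝ) : ℂ) * ∑ i ∈ window N x ε, a i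

lemma norm_cAvg_le {N : ℕ} {x ε : ℝ} (hε : 0 ≤ ε) {a : ℤ → ℂ} {c : ℝ} (h : ∀ i, ‖a i‖ ≤ c) :
    ‖cAvg N x ε a‖ ≤ 1 / (2 * (N : ℝ) * ε) * ((window N x ε).card : ℝ) * c := by
  have h0 : 0 ≤ 1 / (2 * (N : ℝ) * ε) := by positivity
  rw [cAvg, norm_mul, Complex.norm_real, Real.norm_of_nonneg h0, mul_assoc (1 / _)]
  refine mul_le_mul_of_nonneg_left ?_ h0
  refine (norm_sum_le_of_le _ fun i _ => h i).trans ?_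
  simp

lemma fourier_add_arg (k : ℤ) (a b : AddCircle (1 : ℝ)) :
    fourier k (a + b) = fourier k a * fourier k b := by
  simp only [fourier_apply, smul_add, AddCircle.toCircle_add, Circle.coe_mul]

lemma norm_fourier_apply (k : ℤ) (a : AddCircle (1 : ℝ)) : ‖fourier k a‖ = 1 := by
  rw [fourier_apply, Circle.norm_coe]

lemma fourier_irrational_ne_one {w : ℝ} (hw : Irrational w) {k : ℤ} (hk : k ≠ 0) :
    fourier k (w : AddCircle (1 : ℝ)) ≠ 1 := by
  intro h
  have h0 : AddCircle.toCircle (k • (w : AddCircle (1 : ℝ))) =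
      AddCircle.toCircle (0 : AddCircle (1 : ℝ)) := by
    rw [AddCircle.toCircle_zero]
    exact Circle.ext h
  have h1 := AddCircle.injective_toCircle one_ne_zero h0
  rw [← AddCircle.coe_zsmul, AddCircle.coe_eq_zero_iff] at h1
  obtain ⟨n, hn⟩ := h1
  simp only [zsmul_eq_mul, mul_one] at hn
  exact (hw.intCast_mul hk).ne_int n hn.symm

lemma integral_fourier_eq_zero {w : ℝ} (hw : Irrational w) {k : ℤ} (hk : k ≠ 0) :
    ∫ t in (0 : ℝ)..1, fourier k (t : AddCircle (1 : ℝ)) = 0 := by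
  -- Translation by `w` multiplies the integral by `fourier k w ≠ 1` and also preserves it.
  set g : ℝ → ℂ := fun t => fourier k (t : AddCircle (1 : ℝ)) with hg
  have hper : Function.Periodic g 1 := by
    intro t
    simp only [hg, AddCircle.coe_add, AddCircle.coe_period, add_zero]
  have h1 : ∫ t in (0 : ℝ)..1, g (t + w) = ∫ t in (0 : ℝ)..1, g t := by
    rw [intervalIntegral.integral_comp_add_right]
    simpa [add_comm] using hper.intervalIntegral_add_eq w 0
  have h2 : ∫ t in (0 : ℝ)..1, g (t + w) = (∫ t in (0 : ℝ)..1, g t) * g w := by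
    rw [← intervalIntegral.integral_mul_const]
    congr 1
    ext t
    simp only [hg, AddCircle.coe_add, fourier_add_arg]
  rw [h1] at h2
  have h3 : (∫ t in (0 : ℝ)..1, g t) * (g w - 1) = 0 := by
    rw [mul_sub, ← h2]; simp
  exact (mul_eq_zero.1 h3).resolve_right (sub_ne_zero.2 (fourier_irrational_ne_one hw hk))

/-- Equidistribution tested on a single nontrivial character. -/
lemma tendsto_cAvg_fourier {x w : ℝ} (hw : Irrational w) {lam ω : ℕ → ℤ → ℝ}
    (hω : ∀ N i, ω N i = lam N i - lam N (i - 1))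
    (hii : DTendsto (fun N ε => fmax (window N x ε) (fun i => |ω N i - w|)) 0)
    {k : ℤ} (hk : k ≠ 0) :
    Tendsto (fun p : ℝ × ℕ =>
        cAvg p.2 x p.1 (fun i => fourier k (lam p.2 i : AddCircle (1 : ℝ)))) dlim (𝓝 0) := by
  set e : ℝ → ℂ := fun t => fourier k (t : AddCircle (1 : ℝ)) with he
  have hec : Continuous e := (fourier k).continuous.comp (AddCircle.continuous_mk' 1)
  have hadd : ∀ a b, e (a + b) = e a * e b := fun a b => by
    simp only [he, AddCircle.coe_add, fourier_add_arg]
  have hn : ∀ a, ‖e a‖ = 1 := fun a => norm_fourier_apply k _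
  have hc : 0 < ‖1 - e w‖ := norm_pos_iff.2 (sub_ne_zero.2 (fourier_irrational_ne_one hw hk).symm)
  rw [Metric.tendsto_nhds]
  intro δ hδ
  set η := δ * ‖1 - e w‖ / 8 with hη
  have hη0 : 0 < η := by positivity
  obtain ⟨r, hr, hr'⟩ := Metric.continuous_iff.1 hec w η hη0
  filter_upwards [eventually_dlim_pos, eventually_card_window_le x,
    tendsto_inv_size.eventually_lt_const hη0,
    (tendsto_of_dTendsto hii).eventually_lt_const hr] with p hp hcard hinv hmax
  obtain ⟨h1, h2⟩ := hp
  have h2' : (0 : ℝ) < p.2 := by exact_mod_cast h2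
  set q := 1 / (2 * (p.2 : ℝ) * p.1) with hq
  have hq0 : 0 < q := by positivity
  set W := window p.2 x p.1 with hW
  set θ : ℤ → ℂ := fun i => e (lam p.2 i) with hθ
  have hsmall : ∀ i ∈ W, ‖θ i - e w * θ (i - 1)‖ ≤ η := by
    intro i hi
    have hd : dist (ω p.2 i) w < r := by
      rw [Real.dist_eq]
      exact (le_fmax (f := fun i => |ω p.2 i - w|) hi).trans_lt hmax
    have h3 : θ i = e (ω p.2 i) * θ (i - 1) := by
      rw [hθ]; simp only
      rw [← hadd, hω]; congr 1; ring
    rw [h3, ← sub_mul, norm_mul, hn, mul_one, ← dist_eq_norm]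
    exact (hr' _ hd).le
  have hA : ‖∑ i ∈ W, (θ i - e w * θ (i - 1))‖ ≤ W.card * η := by
    refine (norm_sum_le_of_le _ hsmall).trans ?_
    simp
  have hB : ‖∑ i ∈ W, (θ i - θ (i - 1))‖ ≤ 2 :=
    norm_sum_window_sub_pred_le (fun i => (hn _).le) _ _ _
  have hid : (1 - e w) * ∑ i ∈ W, θ i
      = ∑ i ∈ W, (θ i - e w * θ (i - 1)) - e w * ∑ i ∈ W, (θ i - θ (i - 1)) := by
    simp only [Finset.sum_sub_distrib, ← Finset.mul_sum]; ring
  have hS : ‖1 - e w‖ * ‖∑ i ∈ W, θ i‖ ≤ W.card * η + 2 := by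
    rw [← norm_mul, hid]
    refine (norm_sub_le _ _).trans (add_le_add hA ?_)
    rw [norm_mul, hn, one_mul]; exact hB
  have hfin : ‖1 - e w‖ * (q * ‖∑ i ∈ W, θ i‖) ≤ 4 * η := by
    calc ‖1 - e w‖ * (q * ‖∑ i ∈ W, θ i‖) = q * (‖1 - e w‖ * ‖∑ i ∈ W, θ i‖) := by ring
      _ ≤ q * (W.card * η + 2) := mul_le_mul_of_nonneg_left hS hq0.le
      _ = (q * W.card) * η + 2 * q := by ring
      _ ≤ 2 * η + 2 * η := by gcongr
      _ = 4 * η := by ring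
  have hfin' : ‖1 - e w‖ * (q * ‖∑ i ∈ W, θ i‖) < ‖1 - e w‖ * δ := by
    refine hfin.trans_lt ?_
    rw [hη]; nlinarith [mul_pos hδ hc]
  rw [dist_zero_right, cAvg, norm_mul, Complex.norm_real, Real.norm_of_nonneg hq0.le]
  exact lt_of_mul_lt_mul_left hfin' hc.le

instance : Fact ((0 : ℝ) < 1) := ⟨one_pos⟩

lemma intervalIntegrable_circle (f : C(AddCircle (1 : ℝ), ℂ)) :
    IntervalIntegrable (fun t : ℝ => f (t : AddCircle (1 : ℝ))) volume 0 1 :=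
  (f.continuous.comp (AddCircle.continuous_mk' 1)).intervalIntegrable _ _

/-- Weyl equidistribution modulo `1` of the `lam N i`, `i` in the window. -/
lemma tendsto_cAvg {x w : ℝ} (hw : Irrational w) {lam ω : ℕ → ℤ → ℝ}
    (hω : ∀ N i, ω N i = lam N i - lam N (i - 1))
    (hii : DTendsto (fun N ε => fmax (window N x ε) (fun i => |ω N i - w|)) 0)
    (f : C(AddCircle (1 : ℝ), ℂ)) :
    Tendsto (fun p : ℝ × ℕ => cAvg p.2 x p.1 (fun i => f (lam p.2 i : AddCircle (1 : ℝ)))) dlim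
      (𝓝 (∫ t in (0 : ℝ)..1, f (t : AddCircle (1 : ℝ)))) := by
  have hspan : ∀ g ∈ Submodule.span ℂ (Set.range (@fourier (1 : ℝ))),
      Tendsto (fun p : ℝ × ℕ => cAvg p.2 x p.1 (fun i => g (lam p.2 i : AddCircle (1 : ℝ)))) dlim
        (𝓝 (∫ t in (0 : ℝ)..1, g (t : AddCircle (1 : ℝ)))) := by
    intro g hg
    induction hg using Submodule.span_induction with
    | mem g hg =>
      obtain ⟨k, rfl⟩ := hg
      rcases eq_or_ne k 0 with rfl | hk
      · have h := (Complex.continuous_ofReal.tendsto 1).comp (tendsto_card_window x)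
        simpa [cAvg, Function.comp_def] using h
      · rw [integral_fourier_eq_zero hw hk]
        exact tendsto_cAvg_fourier hw hω hii hk
    | zero => simpa [cAvg] using tendsto_const_nhds
    | add g h _ _ hg hh =>
      have := hg.add hh
      rw [← intervalIntegral.integral_add (intervalIntegrable_circle g)
        (intervalIntegrable_circle h)] at this
      simpa only [cAvg, ContinuousMap.add_apply, Finset.sum_add_distrib, mul_add] using this
    | smul c g _ hg =>
      have := hg.const_mul c
      rw [← intervalIntegral.integral_const_mul] at this
      simpa only [cAvg, ContinuousMap.smul_apply, smul_eq_mul, ← Finset.mul_sum,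
        mul_left_comm] using this
  have hdense : f ∈ (Submodule.span ℂ (Set.range (@fourier (1 : ℝ)))).topologicalClosure := by
    rw [span_fourier_closure_eq_top]; trivial
  have hdense' : f ∈ closure (Submodule.span ℂ (Set.range (@fourier (1 : ℝ))) : Set _) := hdense
  rw [Metric.tendsto_nhds]
  intro δ hδ
  obtain ⟨g, hg, hfg⟩ := Metric.mem_closure_iff.1 hdense' (δ / 8) (by positivity)
  have hpt : ∀ a, ‖f a - g a‖ ≤ δ / 8 := fun a => by
    rw [← dist_eq_norm]; exact (ContinuousMap.dist_apply_le_dist a).trans hfg.le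
  have hint : ‖(∫ t in (0 : ℝ)..1, f (t : AddCircle (1 : ℝ)))
      - ∫ t in (0 : ℝ)..1, g (t : AddCircle (1 : ℝ))‖ ≤ δ / 8 := by
    rw [← intervalIntegral.integral_sub (intervalIntegrable_circle f)
      (intervalIntegrable_circle g)]
    simpa using intervalIntegral.norm_integral_le_of_norm_le_const (a := (0 : ℝ)) (b := 1)
      (C := δ / 8) (f := fun t : ℝ => f (t : AddCircle (1 : ℝ)) - g (t : AddCircle (1 : ℝ)))
      (fun t _ => hpt _)
  filter_upwards [eventually_dlim_pos, eventually_card_window_le x,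
    Metric.tendsto_nhds.1 (hspan g hg) (δ / 2) (by positivity)] with p hp hcard hgp
  have h1 := norm_cAvg_le (N := p.2) (x := x) hp.1.le
    (a := fun i => f (lam p.2 i : AddCircle (1 : ℝ)) - g (lam p.2 i : AddCircle (1 : ℝ)))
    (fun i => hpt _)
  have h2 : cAvg p.2 x p.1
      (fun i => f (lam p.2 i : AddCircle (1 : ℝ)) - g (lam p.2 i : AddCircle (1 : ℝ)))
      = cAvg p.2 x p.1 (fun i => f (lam p.2 i : AddCircle (1 : ℝ)))
        - cAvg p.2 x p.1 (fun i => g (lam p.2 i : AddCircle (1 : ℝ))) := by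
    simp only [cAvg, Finset.sum_sub_distrib, mul_sub]
  rw [h2, ← dist_eq_norm] at h1
  rw [← dist_eq_norm, dist_comm] at hint
  have h3 : 1 / (2 * (p.2 : ℝ) * p.1) * ((window p.2 x p.1).card : ℝ) * (δ / 8) ≤ 2 * (δ / 8) :=
    mul_le_mul_of_nonneg_right hcard (by positivity)
  have h4 := dist_triangle4 (cAvg p.2 x p.1 (fun i => f (lam p.2 i : AddCircle (1 : ℝ))))
    (cAvg p.2 x p.1 (fun i => g (lam p.2 i : AddCircle (1 : ℝ))))
    (∫ t in (0 : ℝ)..1, g (t : AddCircle (1 : ℝ)))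
    (∫ t in (0 : ℝ)..1, f (t : AddCircle (1 : ℝ)))
  linarith

lemma tendsto_winAvg {x w : ℝ} (hw : Irrational w) {lam ω : ℕ → ℤ → ℝ}
    (hω : ∀ N i, ω N i = lam N i - lam N (i - 1))
    (hii : DTendsto (fun N ε => fmax (window N x ε) (fun i => |ω N i - w|)) 0)
    {F : ℝ → ℝ} (hF : Continuous F) (hper : Function.Periodic F 1) :
    Tendsto (fun p : ℝ × ℕ => winAvg p.2 x p.1 (fun i => F (lam p.2 i))) dlim
      (𝓝 (∫ t in (0 : ℝ)..1, F t)) := by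
  have hlift : Continuous (hper.lift : AddCircle (1 : ℝ) → ℝ) := continuous_coinduced_dom.2 hF
  have h := tendsto_cAvg hw hω hii ⟨fun a => ((hper.lift a : ℝ) : ℂ),
    Complex.continuous_ofReal.comp hlift⟩
  simp only [ContinuousMap.coe_mk, Function.Periodic.lift_coe,
    intervalIntegral.integral_ofReal] at h
  have h' := (Complex.continuous_re.tendsto _).comp h
  simp only [Complex.ofReal_re] at h'
  refine h'.congr fun p => ?_
  simp only [Function.comp, cAvg, winAvg]
  rw [← Complex.ofReal_sum, ← Complex.ofReal_mul, Complex.ofReal_re]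

/-! ### The discrete Gaussian -/

lemma summable_exp_sq {K : ℝ} (hK : 0 < K) :
    Summable fun m : ℤ => Real.exp (-K * (m : ℝ) ^ 2) := by
  have h := summable_pow_mul_jacobiTheta₂_term_bound 0 (T := K / Real.pi) (by positivity) 0
  refine h.congr fun m => ?_
  have := Real.pi_ne_zero
  simp only [pow_zero, one_mul]
  congr 1
  field_simp
  ring

lemma exp_shift_le {K : ℝ} (hK : 0 < K) {R l : ℝ} (hl : |l| ≤ R) (m : ℤ) :
    Real.exp (-K * ((m : ℝ) - l) ^ 2)
      ≤ Real.exp (K * R ^ 2) * Real.exp (-(K / 2) * (m : ℝ) ^ 2) := by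
  rw [← Real.exp_add, Real.exp_le_exp]
  have h1 : l ^ 2 ≤ R ^ 2 := sq_le_sq' (abs_le.1 hl).1 (abs_le.1 hl).2
  have h2 : 0 ≤ ((m : ℝ) - 2 * l) ^ 2 := sq_nonneg _
  nlinarith [mul_nonneg hK.le h2, mul_nonneg hK.le (sub_nonneg.2 h1)]

lemma summable_Z {K : ℝ} (hK : 0 < K) (l : ℝ) :
    Summable fun m : ℤ => Real.exp (-K * ((m : ℝ) - l) ^ 2) :=
  Summable.of_nonneg_of_le (fun _ => (Real.exp_pos _).le) (exp_shift_le hK le_rfl)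
    ((summable_exp_sq (half_pos hK)).mul_left _)

lemma continuous_Zfun {K : ℝ} (hK : 0 < K) : Continuous (Zfun K) := by
  rw [continuous_iff_continuousAt]
  intro l
  have h : ContinuousOn (Zfun K) (Metric.ball 0 (|l| + 1)) := by
    refine continuousOn_tsum (fun m => by fun_prop)
      ((summable_exp_sq (half_pos hK)).mul_left (Real.exp (K * (|l| + 1) ^ 2))) ?_
    intro m t ht
    rw [Real.norm_of_nonneg (Real.exp_pos _).le]
    refine exp_shift_le hK ?_ m
    simpa using (mem_ball_zero_iff.1 ht).le
  exact h.continuousAt (Metric.isOpen_ball.mem_nhds (by simp))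

lemma Zfun_pos {K : ℝ} (hK : 0 < K) (l : ℝ) : 0 < Zfun K l :=
  (summable_Z hK l).tsum_pos (fun _ => (Real.exp_pos _).le) 0 (Real.exp_pos _)

lemma periodic_Zfun (K : ℝ) : Function.Periodic (Zfun K) 1 := by
  intro l
  rw [Zfun, Zfun, ← (Equiv.addRight (1 : ℤ)).tsum_eq]
  simp

/-- Completing the square in the sum defining `muK`. -/
lemma muK_eq (K w l : ℝ) (n : ℤ) :
    muK K w l n = Real.exp (-K * ((n : ℝ) - w) ^ 2 / 2)
      * (Zfun (2 * K) (l - ((n : ℝ) + w) / 2) / (Zfun K (l - w) * Zfun K l)) := by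
  rw [muK, ← mul_div_assoc, Zfun, ← tsum_mul_left, ← tsum_div_const]
  congr 1
  ext m
  rw [rho, rho, div_mul_div_comm, ← Real.exp_add, ← Real.exp_add]
  congr 2
  push_cast
  ring

lemma continuous_muK {K : ℝ} (hK : 0 < K) (w : ℝ) (n : ℤ) :
    Continuous fun l => muK K w l n := by
  simp only [muK_eq]
  have h1 := continuous_Zfun hK
  have h2 := continuous_Zfun (mul_pos two_pos hK)
  refine continuous_const.mul (Continuous.div (by fun_prop) (by fun_prop) fun l => ?_)
  exact (mul_pos (Zfun_pos hK _) (Zfun_pos hK _)).ne'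

lemma periodic_muK (K w : ℝ) (n : ℤ) : Function.Periodic (fun l => muK K w l n) 1 := by
  intro l
  simp only [muK_eq]
  rw [show l + 1 - ((n : ℝ) + w) / 2 = l - ((n : ℝ) + w) / 2 + 1 by ring,
    show l + 1 - w = l - w + 1 by ring, periodic_Zfun, periodic_Zfun, periodic_Zfun]

lemma exists_Zfun_le {K : ℝ} (hK : 0 < K) : ∃ M, ∀ l, Zfun K l ≤ M := by
  obtain ⟨M, hM⟩ := ((periodic_Zfun K).isBounded_of_continuous one_ne_zero
    (continuous_Zfun hK)).bddAbove
  exact ⟨M, fun l => hM ⟨l, rfl⟩⟩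

lemma exists_le_Zfun {K : ℝ} (hK : 0 < K) : ∃ c, 0 < c ∧ ∀ l, c ≤ Zfun K l := by
  obtain ⟨_, ⟨l₀, rfl⟩, h⟩ := ((periodic_Zfun K).compact_of_continuous one_ne_zero
    (continuous_Zfun hK)).exists_isLeast (Set.range_nonempty _)
  exact ⟨Zfun K l₀, Zfun_pos hK _, fun l => h ⟨l, rfl⟩⟩

lemma muK_nonneg {K : ℝ} (hK : 0 < K) (w l : ℝ) (n : ℤ) : 0 ≤ muK K w l n := by
  rw [muK_eq]
  have h1 := Zfun_pos hK (l - w)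
  have h2 := Zfun_pos hK l
  have h3 := Zfun_pos (mul_pos two_pos hK) (l - ((n : ℝ) + w) / 2)
  positivity

/-- A Gaussian bound uniform in `l` with a rate `5/12` strictly between `1/3` and `1/2`: the drift
`w` costs part of the rate `1/2`, and the margin over `1/3` controls large `n`. -/
lemma muK_le {K : ℝ} (hK : 0 < K) (w : ℝ) :
    ∃ B, 0 < B ∧ ∀ l n, muK K w l n
      ≤ B * (Real.exp (-(K / 12) * (n : ℝ) ^ 2) * Real.exp (-K * (n : ℝ) ^ 2 / 3)) := by
  obtain ⟨M, hM⟩ := exists_Zfun_le (mul_pos two_pos hK)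
  obtain ⟨c, hc, hc'⟩ := exists_le_Zfun hK
  have hM0 : 0 < M := (Zfun_pos (mul_pos two_pos hK) 0).trans_le (hM 0)
  refine ⟨Real.exp (5 * K * w ^ 2 / 2) * (M / (c * c)), by positivity, fun l n => ?_⟩
  have h1 : Zfun (2 * K) (l - ((n : ℝ) + w) / 2) / (Zfun K (l - w) * Zfun K l) ≤ M / (c * c) :=
    div_le_div₀ hM0.le (hM _) (by positivity) (mul_le_mul (hc' _) (hc' _) hc.le
      (Zfun_pos hK _).le)
  have h2 : Real.exp (-K * ((n : ℝ) - w) ^ 2 / 2) ≤ Real.exp (5 * K * w ^ 2 / 2)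
      * (Real.exp (-(K / 12) * (n : ℝ) ^ 2) * Real.exp (-K * (n : ℝ) ^ 2 / 3)) := by
    rw [← Real.exp_add, ← Real.exp_add, Real.exp_le_exp]
    nlinarith [mul_nonneg hK.le (sq_nonneg ((n : ℝ) - 6 * w))]
  rw [muK_eq]
  calc _ ≤ (Real.exp (5 * K * w ^ 2 / 2)
      * (Real.exp (-(K / 12) * (n : ℝ) ^ 2) * Real.exp (-K * (n : ℝ) ^ 2 / 3))) * (M / (c * c)) :=
        mul_le_mul h2 h1 (div_nonneg (Zfun_pos (mul_pos two_pos hK) _).le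
          (mul_pos (Zfun_pos hK _) (Zfun_pos hK _)).le) (by positivity)
    _ = _ := by ring

/-- Crude bound on the deviation of the window average of `muK`, for every `N`, `ε > 0` and `n`. -/
lemma abs_dev_le {K w B : ℝ} (hK : 0 < K)
    (hB : ∀ l n, muK K w l n
      ≤ B * (Real.exp (-(K / 12) * (n : ℝ) ^ 2) * Real.exp (-K * (n : ℝ) ^ 2 / 3)))
    (N : ℕ) (x : ℝ) {ε : ℝ} (hε : 0 < ε) (a : ℤ → ℝ) (n : ℤ) :
    |winAvg N x ε (fun i => muK K w (a i) n) - ∫ l in (0 : ℝ)..1, muK K w l n|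
      ≤ (1 / (2 * (N : ℝ) * ε) * ((window N x ε).card : ℝ) + 1)
        * (B * (Real.exp (-(K / 12) * (n : ℝ) ^ 2) * Real.exp (-K * (n : ℝ) ^ 2 / 3))) := by
  set b := B * (Real.exp (-(K / 12) * (n : ℝ) ^ 2) * Real.exp (-K * (n : ℝ) ^ 2 / 3)) with hb
  have hnorm : ∀ l, ‖muK K w l n‖ ≤ b := fun l => by
    rw [Real.norm_of_nonneg (muK_nonneg hK w l n)]; exact hB l n
  have h0 : 0 ≤ 1 / (2 * (N : ℝ) * ε) := by positivity
  have h1 : |winAvg N x ε (fun i => muK K w (a i) n)|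
      ≤ 1 / (2 * (N : ℝ) * ε) * ((window N x ε).card : ℝ) * b := by
    rw [winAvg, abs_mul, abs_of_nonneg h0, mul_assoc (1 / _)]
    refine mul_le_mul_of_nonneg_left ?_ h0
    rw [← Real.norm_eq_abs]
    refine (norm_sum_le_of_le _ fun i _ => hnorm (a i)).trans ?_
    simp
  have h2 : |∫ l in (0 : ℝ)..1, muK K w l n| ≤ b := by
    simpa using intervalIntegral.norm_integral_le_of_norm_le_const (a := (0 : ℝ)) (b := 1)
      (C := b) (f := fun l => muK K w l n) (fun l _ => hnorm l)
  refine (abs_sub _ _).trans ?_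
  linarith

/-! ### Uniform convergence of the averages -/

theorem stmt4 (K : ℝ) (hK : 0 < K) (x w : ℝ) (hw : Irrational w)
    (lam ω : ℕ → ℤ → ℝ)
    (hω : ∀ N i, ω N i = lam N i - lam N (i - 1))
    (hi : DBddLimsup (fun N ε =>
      fmax (window N x ε) (fun i => (N : ℝ) * |ω N (i + 1) - ω N i|)))
    (hii : DTendsto (fun N ε =>
      fmax (window N x ε) (fun i => |ω N i - w|)) 0) :
    ∃ C : ℕ → ℝ → ℝ, DTendsto C 0 ∧
      ∀ (N : ℕ) (ε : ℝ), 0 < ε → ∀ n : ℤ,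
        |winAvg N x ε (fun i => muK K w (lam N i) n) -
            ∫ l in (0 : ℝ)..1, muK K w l n| ≤
          C N ε * Real.exp (-K * (n : ℝ) ^ 2 / 3) := by
  obtain ⟨B, hB0, hB⟩ := muK_le hK w
  set D : ℕ → ℝ → ℤ → ℝ := fun N ε n =>
    |winAvg N x ε (fun i => muK K w (lam N i) n) - ∫ l in (0 : ℝ)..1, muK K w l n| with hD
  set T : ℕ → ℝ → ℤ → ℝ := fun N ε n => D N ε n * Real.exp (K * (n : ℝ) ^ 2 / 3) with hT
  have hcancel : ∀ n : ℤ,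
      Real.exp (-K * (n : ℝ) ^ 2 / 3) * Real.exp (K * (n : ℝ) ^ 2 / 3) = 1 := fun n => by
    rw [← Real.exp_add, ← Real.exp_zero]; congr 1; ring
  have hTle : ∀ N ε n, 0 < ε → T N ε n
      ≤ (1 / (2 * (N : ℝ) * ε) * ((window N x ε).card : ℝ) + 1)
        * (B * Real.exp (-(K / 12) * (n : ℝ) ^ 2)) := by
    intro N ε n hε
    have h := mul_le_mul_of_nonneg_right (abs_dev_le hK hB N x hε (lam N) n)
      (Real.exp_pos (K * (n : ℝ) ^ 2 / 3)).le
    refine h.trans_eq ?_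
    linear_combination (1 / (2 * (N : ℝ) * ε) * ((window N x ε).card : ℝ) + 1)
        * (B * Real.exp (-(K / 12) * (n : ℝ) ^ 2)) * hcancel n
  have hT0 : ∀ N ε n, 0 ≤ T N ε n := fun N ε n =>
    mul_nonneg (abs_nonneg _) (Real.exp_pos _).le
  refine ⟨fun N ε => ⨆ n, T N ε n, dTendsto_of_tendsto ?_, ?_⟩
  · rw [Metric.tendsto_nhds]
    intro δ hδ
    -- Outside a finite set of `n` the crude bound already makes the deviation small.
    have hcof : ∀ᶠ n : ℤ in cofinite, 3 * (B * Real.exp (-(K / 12) * (n : ℝ) ^ 2)) ≤ δ / 2 := by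
      have h := ((summable_exp_sq (by positivity : 0 < K / 12)).mul_left
        B).tendsto_cofinite_zero.const_mul 3
      rw [mul_zero] at h
      exact h.eventually_le_const (by positivity)
    have hfin : {n : ℤ | ¬ 3 * (B * Real.exp (-(K / 12) * (n : ℝ) ^ 2)) ≤ δ / 2}.Finite := hcof
    have hptw : ∀ n : ℤ, ∀ᶠ p in dlim, T p.2 p.1 n ≤ δ / 2 := by
      intro n
      have h1 := tendsto_winAvg hw hω hii (continuous_muK hK w n) (periodic_muK K w n)
      have h2 := ((h1.sub_const (∫ l in (0 : ℝ)..1, muK K w l n)).abs).mul_const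
        (Real.exp (K * (n : ℝ) ^ 2 / 3))
      rw [sub_self, abs_zero, zero_mul] at h2
      exact h2.eventually_le_const (by positivity)
    filter_upwards [eventually_dlim_pos, eventually_card_window_le x,
      (eventually_all_finite hfin).2 fun n _ => hptw n] with p hp hcard hsmall
    have hsup : ⨆ n, T p.2 p.1 n ≤ δ / 2 := by
      refine ciSup_le fun n => ?_
      by_cases hn : 3 * (B * Real.exp (-(K / 12) * (n : ℝ) ^ 2)) ≤ δ / 2
      · refine (hTle p.2 p.1 n hp.1).trans (le_trans ?_ hn)
        exact mul_le_mul_of_nonneg_right (by linarith) (by positivity)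
      · exact hsmall n hn
    rw [Real.dist_eq, sub_zero, abs_of_nonneg (Real.iSup_nonneg (hT0 _ _))]
    linarith
  · intro N ε hε n
    have hbdd : BddAbove (Set.range (T N ε)) := by
      refine ⟨(1 / (2 * (N : ℝ) * ε) * ((window N x ε).card : ℝ) + 1) * B, ?_⟩
      rintro _ ⟨m, rfl⟩
      refine (hTle N ε m hε).trans (mul_le_mul_of_nonneg_left ?_ (by positivity))
      refine mul_le_of_le_one_right hB0.le (Real.exp_le_one_iff.2 ?_)
      nlinarith [mul_nonneg hK.le (sq_nonneg (m : ℝ))]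
    have h1 := mul_le_mul_of_nonneg_right (le_ciSup hbdd n)
      (Real.exp_pos (-K * (n : ℝ) ^ 2 / 3)).le
    refine le_trans (le_of_eq ?_) h1
    change D N ε n = D N ε n * Real.exp (K * (n : ℝ) ^ 2 / 3) * Real.exp (-K * (n : ℝ) ^ 2 / 3)
    linear_combination -(D N ε n) * hcancel n
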